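/- arXiv:1810.01049 — 13 statements merged into one kernel-verified Lean document; each statement's English description precedes it below -/
import Mathlib

section
/- Let p_1, …, p_n be points in ℝ^d, let k ≥ 1, let 𝔽 be a nonempty set of labelings σ : {1,…,n} → {1,…,k}, and let δ_opt² be the optimal constrained k-means value of this instance. Let λ ≥ 1 and let c_1, …, c_k ∈ ℝ^d be a λ-approximate solution of the unconstrained k-means problem, i.e., (1/n)·∑_{i=1}^n min_{1≤j≤k} ||p_i − c_j||² ≤ λ · inf_{(c'_1,…,c'_k)∈(ℝ^d)^k} (1/n)·∑_{i=1}^n min_{1≤j≤k} ||p_i − c'_j||². Then, with C = {c_1,…,c_k}, the restricted constrained optimum satisfies δ_opt²([C]^k) ≤ (18λ + 16)·δ_opt². -/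
/-!
Given a feasible labeling `σ` and arbitrary centers `c'`, replace every `c' j` by the point
`c (π j)` of the approximate solution nearest to it. For a point `p i` whose nearest approximate
center is `c (m i)`, two triangle inequalities give
`‖p i - c (π (σ i))‖ ≤ 2 ‖p i - c' (σ i)‖ + ‖p i - c (m i)‖`
(`norm_sub_nearest_sq_le` is the squared form). Summing, the new cost is at most `8` times the
cost of `(σ, c')` plus `2` times the unconstrained cost of `c`. The latter is at most `lam` times
the unconstrained optimum, hence at most `lam` times the cost of `(σ, c')`. This yields the
factor `2 * lam + 8`, which is below `18 * lam + 16`.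
-/

/-- The optimal constrained k-means value of the instance `p` with feasible labelings `F`. -/
noncomputable def kmeansOptC {d n k : ℕ} (p : Fin n → EuclideanSpace ℝ (Fin d))
    (F : Set (Fin n → Fin k)) : ℝ :=
  sInf {v : ℝ | ∃ σ ∈ F, ∃ c : Fin k → EuclideanSpace ℝ (Fin d),
    v = (n : ℝ)⁻¹ * ∑ i, ‖p i - c (σ i)‖ ^ 2}

/-- The optimal constrained k-means value with centers restricted to the set `C`. -/
noncomputable def kmeansOptCRestricted {d n k : ℕ} (p : Fin n → EuclideanSpace ℝ (Fin d))
    (F : Set (Fin n → Fin k)) (C : Set (EuclideanSpace ℝ (Fin d))) : ℝ :=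
  sInf {v : ℝ | ∃ σ ∈ F, ∃ c : Fin k → EuclideanSpace ℝ (Fin d),
    (∀ j, c j ∈ C) ∧ v = (n : ℝ)⁻¹ * ∑ i, ‖p i - c (σ i)‖ ^ 2}

/-- If `y` is at least as close to `z` as `w` is, then `y` can stand in for `z` as a center of
`x`, at a cost controlled by the costs of `z` and `w`. -/
lemma norm_sub_nearest_sq_le {E : Type*} [SeminormedAddCommGroup E] (x y z w : E)
    (h : ‖z - y‖ ≤ ‖z - w‖) : ‖x - y‖ ^ 2 ≤ 8 * ‖x - z‖ ^ 2 + 2 * ‖x - w‖ ^ 2 := by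
  have h1 : ‖x - y‖ ≤ ‖x - z‖ + ‖z - y‖ := norm_sub_le_norm_sub_add_norm_sub x z y
  have h2 : ‖z - w‖ ≤ ‖z - x‖ + ‖x - w‖ := norm_sub_le_norm_sub_add_norm_sub z x w
  rw [norm_sub_rev z x] at h2
  have h3 : ‖x - y‖ ≤ 2 * ‖x - z‖ + ‖x - w‖ := by linarith
  have h4 : ‖x - y‖ ^ 2 ≤ (2 * ‖x - z‖ + ‖x - w‖) ^ 2 := by gcongr
  nlinarith [sq_nonneg (2 * ‖x - z‖ - ‖x - w‖)]

theorem stmt_3 {d n k : ℕ} (hk : 1 ≤ k) (p : Fin n → EuclideanSpace ℝ (Fin d))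
    (F : Set (Fin n → Fin k)) (hF : F.Nonempty)
    (lam : ℝ) (hlam : 1 ≤ lam) (c : Fin k → EuclideanSpace ℝ (Fin d))
    (happrox : (n : ℝ)⁻¹ * ∑ i, (⨅ j : Fin k, ‖p i - c j‖ ^ 2) ≤
      lam * sInf {v : ℝ | ∃ c' : Fin k → EuclideanSpace ℝ (Fin d),
        v = (n : ℝ)⁻¹ * ∑ i, ⨅ j : Fin k, ‖p i - c' j‖ ^ 2}) :
    kmeansOptCRestricted p F (Set.range c) ≤ (18 * lam + 16) * kmeansOptC p F := by
  have : Nonempty (Fin k) := ⟨⟨0, hk⟩⟩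
  have hK : 0 < 18 * lam + 16 := by linarith
  have hn : (0 : ℝ) ≤ (n : ℝ)⁻¹ := by positivity
  rw [← div_le_iff₀' hK]
  unfold kmeansOptC
  refine le_csInf ?_ ?_
  · obtain ⟨σ, hσ⟩ := hF
    exact ⟨_, σ, hσ, c, rfl⟩
  rintro v ⟨σ, hσ, c', rfl⟩
  rw [div_le_iff₀' hK]
  have hπ : ∀ j, ∃ l, ∀ l', ‖c' j - c l‖ ≤ ‖c' j - c l'‖ := fun j =>
    Finite.exists_min fun l => ‖c' j - c l‖
  choose π hπ using hπ
  have hm : ∀ i, ∃ l, ‖p i - c l‖ ^ 2 = ⨅ j : Fin k, ‖p i - c j‖ ^ 2 := fun i =>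
    exists_eq_ciInf_of_finite
  choose m hm using hm
  have hrestr : kmeansOptCRestricted p F (Set.range c) ≤
      (n : ℝ)⁻¹ * ∑ i, ‖p i - c (π (σ i))‖ ^ 2 := by
    refine csInf_le ⟨0, ?_⟩ ⟨σ, hσ, fun j => c (π j), fun j => ⟨π j, rfl⟩, rfl⟩
    rintro v ⟨σ', -, e, -, rfl⟩
    positivity
  have hsum : ∑ i, ‖p i - c (π (σ i))‖ ^ 2 ≤
      8 * ∑ i, ‖p i - c' (σ i)‖ ^ 2 + 2 * ∑ i, ⨅ j : Fin k, ‖p i - c j‖ ^ 2 := by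
    rw [Finset.mul_sum, Finset.mul_sum, ← Finset.sum_add_distrib]
    refine Finset.sum_le_sum fun i _ => ?_
    rw [← hm i]
    exact norm_sub_nearest_sq_le _ _ _ _ (hπ (σ i) (m i))
  have hunc : sInf {v : ℝ | ∃ c' : Fin k → EuclideanSpace ℝ (Fin d),
      v = (n : ℝ)⁻¹ * ∑ i, ⨅ j : Fin k, ‖p i - c' j‖ ^ 2} ≤
      (n : ℝ)⁻¹ * ∑ i, ‖p i - c' (σ i)‖ ^ 2 := by
    refine le_trans (csInf_le ⟨0, ?_⟩ (Set.mem_ofPred.mpr ⟨c', rfl⟩)) ?_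
    · rintro v ⟨e, rfl⟩
      exact mul_nonneg hn (Finset.sum_nonneg fun i _ => Real.iInf_nonneg fun j => by positivity)
    · refine mul_le_mul_of_nonneg_left (Finset.sum_le_sum fun i _ => ?_) hn
      exact ciInf_le (Set.finite_range fun j => ‖p i - c' j‖ ^ 2).bddBelow (σ i)
  have hv : 0 ≤ (n : ℝ)⁻¹ * ∑ i, ‖p i - c' (σ i)‖ ^ 2 := by positivity
  have h1 := mul_le_mul_of_nonneg_left hsum hn
  have h2 := happrox.trans (mul_le_mul_of_nonneg_left hunc (by linarith))
  have h3 := mul_nonneg (by linarith : 0 ≤ lam) hv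
  rw [mul_add, mul_left_comm _ (8 : ℝ), mul_left_comm _ (2 : ℝ)] at h1
  rw [add_mul, mul_assoc]
  linarith
end

section
/- Let p_1, …, p_n be points in ℝ^d, let k ≥ 1, let 𝔽 be a nonempty set of labelings σ : {1,…,n} → {1,…,k}, and let μ_opt be the optimal constrained k-median value of this instance. Let λ ≥ 1 and let c_1, …, c_k ∈ ℝ^d be a λ-approximate solution of the unconstrained k-median problem, i.e., (1/n)·∑_{i=1}^n min_{1≤j≤k} ||p_i − c_j|| ≤ λ · inf_{(c'_1,…,c'_k)∈(ℝ^d)^k} (1/n)·∑_{i=1}^n min_{1≤j≤k} ||p_i − c'_j||. Then, with C = {c_1,…,c_k}, the restricted constrained optimum satisfies μ_opt([C]^k) ≤ (3λ + 2)·μ_opt. -/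
/-!
Given any feasible labeling `σ` and centers `c'`, replace each `c' j` by the center `c (φ j)`
nearest to it. With `c l` the center nearest to `p i`, and `x = c' (σ i)`,
`‖p i - c (φ (σ i))‖ ≤ ‖p i - x‖ + ‖x - c (φ (σ i))‖ ≤ ‖p i - x‖ + ‖x - c l‖
≤ 2 ‖p i - x‖ + ‖p i - c l‖`.
Averaging over `i`, the last term is at most `lam` times the unconstrained optimum, hence at most
`lam` times the cost of `(σ, c')`. This gives the factor `lam + 2`, which is at most `3 * lam + 2`.
-/

/-- The optimal constrained k-median value of the instance `p` with feasible labelings `F`. -/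
noncomputable def kmedianOptC {d n k : ℕ} (p : Fin n → EuclideanSpace ℝ (Fin d))
    (F : Set (Fin n → Fin k)) : ℝ :=
  sInf {v : ℝ | ∃ σ ∈ F, ∃ c : Fin k → EuclideanSpace ℝ (Fin d),
    v = (n : ℝ)⁻¹ * ∑ i, ‖p i - c (σ i)‖}

/-- The optimal constrained k-median value with centers restricted to the set `C`. -/
noncomputable def kmedianOptCRestricted {d n k : ℕ} (p : Fin n → EuclideanSpace ℝ (Fin d))
    (F : Set (Fin n → Fin k)) (C : Set (EuclideanSpace ℝ (Fin d))) : ℝ :=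
  sInf {v : ℝ | ∃ σ ∈ F, ∃ c : Fin k → EuclideanSpace ℝ (Fin d),
    (∀ j, c j ∈ C) ∧ v = (n : ℝ)⁻¹ * ∑ i, ‖p i - c (σ i)‖}

theorem stmt_4 {d n k : ℕ} (hk : 1 ≤ k) (p : Fin n → EuclideanSpace ℝ (Fin d))
    (F : Set (Fin n → Fin k)) (hF : F.Nonempty)
    (lam : ℝ) (hlam : 1 ≤ lam) (c : Fin k → EuclideanSpace ℝ (Fin d))
    (happrox : (n : ℝ)⁻¹ * ∑ i, (⨅ j : Fin k, ‖p i - c j‖) ≤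
      lam * sInf {v : ℝ | ∃ c' : Fin k → EuclideanSpace ℝ (Fin d),
        v = (n : ℝ)⁻¹ * ∑ i, ⨅ j : Fin k, ‖p i - c' j‖}) :
    kmedianOptCRestricted p F (Set.range c) ≤ (3 * lam + 2) * kmedianOptC p F := by
  have : Nonempty (Fin k) := ⟨⟨0, hk⟩⟩
  have hn : (0 : ℝ) ≤ (n : ℝ)⁻¹ := by positivity
  have hpos : 0 < 3 * lam + 2 := by linarith
  unfold kmedianOptC
  rw [← div_le_iff₀' hpos]
  refine le_csInf ?_ ?_
  · obtain ⟨σ, hσ⟩ := hF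
    exact ⟨_, σ, hσ, c, rfl⟩
  rintro v ⟨σ, hσ, c', rfl⟩
  rw [div_le_iff₀' hpos]
  choose φ hφ using fun j => Finite.exists_min (fun l => ‖c' j - c l‖)
  have hpoint : ∀ i, ‖p i - c (φ (σ i))‖ ≤
      2 * ‖p i - c' (σ i)‖ + ⨅ j : Fin k, ‖p i - c j‖ := by
    intro i
    obtain ⟨l, hl⟩ := exists_eq_ciInf_of_finite (f := fun j : Fin k => ‖p i - c j‖)
    rw [← hl]
    have h1 := norm_sub_le_norm_sub_add_norm_sub (p i) (c' (σ i)) (c (φ (σ i)))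
    have h2 := hφ (σ i) l
    have h3 := norm_sub_le_norm_sub_add_norm_sub (c' (σ i)) (p i) (c l)
    rw [norm_sub_rev (c' (σ i)) (p i)] at h3
    linarith
  have hR : kmedianOptCRestricted p F (Set.range c) ≤
      (n : ℝ)⁻¹ * ∑ i, ‖p i - c (φ (σ i))‖ := by
    refine csInf_le ⟨0, ?_⟩ ⟨σ, hσ, fun j => c (φ j), fun j => ⟨φ j, rfl⟩, rfl⟩
    rintro _ ⟨_, _, _, _, rfl⟩
    positivity
  have hU : sInf {v : ℝ | ∃ c' : Fin k → EuclideanSpace ℝ (Fin d),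
        v = (n : ℝ)⁻¹ * ∑ i, ⨅ j : Fin k, ‖p i - c' j‖} ≤
      (n : ℝ)⁻¹ * ∑ i, ‖p i - c' (σ i)‖ := by
    refine le_trans (b := (n : ℝ)⁻¹ * ∑ i, ⨅ j : Fin k, ‖p i - c' j‖)
      (csInf_le ⟨0, ?_⟩ ⟨c', rfl⟩) ?_
    · rintro _ ⟨_, rfl⟩
      exact mul_nonneg hn (Finset.sum_nonneg fun i _ => Real.iInf_nonneg fun j => norm_nonneg _)
    · refine mul_le_mul_of_nonneg_left (Finset.sum_le_sum fun i _ => ?_) hn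
      exact ciInf_le (Set.finite_range fun j : Fin k => ‖p i - c' j‖).bddBelow (σ i)
  have hsum : (n : ℝ)⁻¹ * ∑ i, ‖p i - c (φ (σ i))‖ ≤
      2 * ((n : ℝ)⁻¹ * ∑ i, ‖p i - c' (σ i)‖) +
        (n : ℝ)⁻¹ * ∑ i, ⨅ j : Fin k, ‖p i - c j‖ := by
    refine (mul_le_mul_of_nonneg_left (Finset.sum_le_sum fun i _ => hpoint i) hn).trans_eq ?_
    rw [Finset.sum_add_distrib, ← Finset.mul_sum]
    ring
  have hv : 0 ≤ (n : ℝ)⁻¹ * ∑ i, ‖p i - c' (σ i)‖ := by positivity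
  have hlU := mul_le_mul_of_nonneg_left hU (by linarith : 0 ≤ lam)
  have hlv := mul_nonneg (by linarith : 0 ≤ lam) hv
  linarith
end

section
/- Let Q be a nonempty finite set of points in ℝ^d and let Q_1 ⊆ Q be a nonempty subset with |Q_1| = α·|Q| for some 0 < α ≤ 1. Let o be the mean of Q, o_1 the mean of Q_1, and δ² = (1/|Q|)·∑_{q∈Q} ||q − o||². Then ||o_1 − o|| ≤ √((1−α)/α) · δ. -/
/-!
Write `o` for the mean of `Q`, `o₁` for the mean of `Q₁`, `n = |Q|`, and give each `q ∈ Q` the weight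
`c q = 1_{Q₁}(q) - α`. As the deviations `q - o` sum to zero over `Q`, the weighted sum
`∑ c q • (q - o)` equals `|Q₁| • (o₁ - o)`. Since `∑ (c q)² = n α (1 - α)`, the Cauchy–Schwarz
inequality gives `(α n ‖o₁ - o‖)² ≤ n α (1 - α) · n δ²`, which is the claim squared.
Centering the indicator by `α` makes the case `α = 1` need no separate treatment.
-/

/-- The mean of a finite set of points in `ℝ^d`. -/
noncomputable def fmean {d : ℕ} (Q : Finset (EuclideanSpace ℝ (Fin d))) :
    EuclideanSpace ℝ (Fin d) :=
  (Q.card : ℝ)⁻¹ • ∑ q ∈ Q, q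

/-- The variance of a finite set of points in `ℝ^d`. -/
noncomputable def fvar {d : ℕ} (Q : Finset (EuclideanSpace ℝ (Fin d))) : ℝ :=
  (Q.card : ℝ)⁻¹ * ∑ q ∈ Q, ‖q - fmean Q‖ ^ 2

lemma card_smul_fmean {d : ℕ} (Q : Finset (EuclideanSpace ℝ (Fin d))) (hQ : Q.Nonempty) :
    (Q.card : ℝ) • fmean Q = ∑ q ∈ Q, q := by
  have h : (Q.card : ℝ) ≠ 0 := by exact_mod_cast hQ.card_pos.ne'
  rw [fmean, smul_smul, mul_inv_cancel₀ h, one_smul]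

theorem stmt_5 {d : ℕ} (Q Q₁ : Finset (EuclideanSpace ℝ (Fin d)))
    (hQ : Q.Nonempty) (hQ₁ : Q₁.Nonempty) (hsub : Q₁ ⊆ Q)
    (α : ℝ) (hα0 : 0 < α) (hα1 : α ≤ 1)
    (hcard : (Q₁.card : ℝ) = α * Q.card) :
    ‖fmean Q₁ - fmean Q‖ ≤ Real.sqrt ((1 - α) / α) * Real.sqrt (fvar Q) := by
  classical
  have hn : (0 : ℝ) < Q.card := by exact_mod_cast hQ.card_pos
  set c : EuclideanSpace ℝ (Fin d) → ℝ := fun q => (if q ∈ Q₁ then 1 else 0) - α with hc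
  have hfilter : Q.filter (· ∈ Q₁) = Q₁ := by
    rw [Finset.filter_mem_eq_inter, Finset.inter_eq_right.mpr hsub]
  have hzero : ∑ q ∈ Q, (q - fmean Q) = 0 := by
    rw [Finset.sum_sub_distrib, Finset.sum_const, ← Nat.cast_smul_eq_nsmul ℝ,
      card_smul_fmean Q hQ, sub_self]
  have hsum : ∑ q ∈ Q, c q • (q - fmean Q) = (Q₁.card : ℝ) • (fmean Q₁ - fmean Q) := by
    simp only [hc, sub_smul, Finset.sum_sub_distrib, ite_smul, one_smul, zero_smul]
    rw [← Finset.sum_filter, hfilter, ← Finset.smul_sum, hzero,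
      smul_zero, sub_zero, Finset.sum_sub_distrib, Finset.sum_const,
      ← Nat.cast_smul_eq_nsmul ℝ, smul_sub, card_smul_fmean Q₁ hQ₁]
  have hcsq : ∑ q ∈ Q, c q ^ 2 = Q.card * (α * (1 - α)) := by
    have h : ∀ q ∈ Q, c q ^ 2 = (if q ∈ Q₁ then 1 - 2 * α else 0) + α ^ 2 := by
      intro q _
      simp only [hc]
      split_ifs <;> ring
    rw [Finset.sum_congr rfl h, Finset.sum_add_distrib, ← Finset.sum_filter, hfilter,
      Finset.sum_const, Finset.sum_const, nsmul_eq_mul, nsmul_eq_mul, hcard]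
    ring
  have hvar : ∑ q ∈ Q, ‖q - fmean Q‖ ^ 2 = Q.card * fvar Q := by
    rw [fvar, mul_inv_cancel_left₀ hn.ne']
  have hnorm : (Q₁.card : ℝ) * ‖fmean Q₁ - fmean Q‖ ≤ ∑ q ∈ Q, |c q| * ‖q - fmean Q‖ := by
    have h := norm_sum_le Q (fun q => c q • (q - fmean Q))
    rw [hsum] at h
    simpa [norm_smul] using h
  have hcs := Finset.sum_mul_sq_le_sq_mul_sq Q (fun q => |c q|) (fun q => ‖q - fmean Q‖)
  simp only [sq_abs] at hcs
  rw [hcsq, hvar] at hcs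
  have hsq := (pow_le_pow_left₀ (by positivity) hnorm 2).trans hcs
  rw [hcard] at hsq
  rw [← Real.sqrt_mul (div_nonneg (sub_nonneg.mpr hα1) hα0.le)]
  apply Real.le_sqrt_of_sq_le
  rw [div_mul_eq_mul_div, le_div_iff₀ hα0]
  -- `hsq` is the goal multiplied through by `α n²`.
  have hpos : 0 < α * (Q.card : ℝ) ^ 2 := by positivity
  refine le_of_mul_le_mul_left ?_ hpos
  linarith
end

section
/- Let Q be a nonempty finite set of points in ℝ^d partitioned as Q = Q_1 ∪ ⋯ ∪ Q_j into pairwise disjoint nonempty subsets, let o be the mean of Q, let o_l be the mean of Q_l, and let δ² be the variance of Q. Let 0 < ε ≤ 1 and assume |Q_l| ≥ (ε/(4j))·|Q| for every 1 ≤ l ≤ j. Then ||o_l − o|| ≤ 2·√(j/ε)·δ for every 1 ≤ l ≤ j, and consequently ||o_l − o_{l'}|| ≤ 4·√(j/ε)·δ for all 1 ≤ l, l' ≤ j. -/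
theorem card_mul_norm_fmean_sub_sq_le {d : ℕ} {Q S : Finset (EuclideanSpace ℝ (Fin d))}
    (hS : S.Nonempty) (hSQ : S ⊆ Q) :
    (S.card : ℝ) * ‖fmean S - fmean Q‖ ^ 2 ≤ Q.card * fvar Q := by
  have hs : (0 : ℝ) < S.card := by exact_mod_cast hS.card_pos
  have hq : (0 : ℝ) < Q.card := by exact_mod_cast (hS.mono hSQ).card_pos
  have hsum : (S.card : ℝ) • (fmean S - fmean Q) = ∑ q ∈ S, (q - fmean Q) := by
    rw [Finset.sum_sub_distrib, Finset.sum_const, smul_sub, ← Nat.cast_smul_eq_nsmul ℝ]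
    conv_lhs => rw [fmean, smul_inv_smul₀ hs.ne']
  have hnorm : (S.card : ℝ) * ‖fmean S - fmean Q‖ ≤ ∑ q ∈ S, ‖q - fmean Q‖ := by
    have h := norm_sum_le S (fun q => q - fmean Q)
    rwa [← hsum, norm_smul, Real.norm_of_nonneg hs.le] at h
  have hmono : ∑ q ∈ S, ‖q - fmean Q‖ ^ 2 ≤ ∑ q ∈ Q, ‖q - fmean Q‖ ^ 2 :=
    Finset.sum_le_sum_of_subset_of_nonneg hSQ fun _ _ _ => by positivity
  have hvar : (Q.card : ℝ) * fvar Q = ∑ q ∈ Q, ‖q - fmean Q‖ ^ 2 := by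
    rw [fvar, mul_inv_cancel_left₀ hq.ne']
  rw [hvar]
  refine le_trans (le_of_mul_le_mul_left ?_ hs) hmono
  calc (S.card : ℝ) * (S.card * ‖fmean S - fmean Q‖ ^ 2)
      = (S.card * ‖fmean S - fmean Q‖) ^ 2 := by ring
    _ ≤ (∑ q ∈ S, ‖q - fmean Q‖) ^ 2 := by gcongr
    _ ≤ S.card * ∑ q ∈ S, ‖q - fmean Q‖ ^ 2 := sq_sum_le_card_mul_sum_sq

theorem stmt_6 {d j : ℕ} (Q : Finset (EuclideanSpace ℝ (Fin d)))
    (Qs : Fin j → Finset (EuclideanSpace ℝ (Fin d)))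
    (hQ : Q.Nonempty)
    (hne : ∀ l, (Qs l).Nonempty)
    (hdisj : ∀ l₁ l₂, l₁ ≠ l₂ → Disjoint (Qs l₁) (Qs l₂))
    (hsub : ∀ l, Qs l ⊆ Q)
    (hcover : ∀ q ∈ Q, ∃ l, q ∈ Qs l)
    (ε : ℝ) (hε0 : 0 < ε) (hε1 : ε ≤ 1)
    (hbig : ∀ l, (ε / (4 * j)) * Q.card ≤ ((Qs l).card : ℝ)) :
    (∀ l, ‖fmean (Qs l) - fmean Q‖ ≤ 2 * Real.sqrt (j / ε) * Real.sqrt (fvar Q)) ∧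
    (∀ l l', ‖fmean (Qs l) - fmean (Qs l')‖ ≤ 4 * Real.sqrt (j / ε) * Real.sqrt (fvar Q)) := by
  
  have key : ∀ l, ‖fmean (Qs l) - fmean Q‖ ≤
      2 * Real.sqrt (j / ε) * Real.sqrt (fvar Q) := by
    intro l
    have hj : (0 : ℝ) < j := by exact_mod_cast l.pos
    have hq : (0 : ℝ) < Q.card := by exact_mod_cast hQ.card_pos
    have hv : 0 ≤ fvar Q := by unfold fvar; positivity
    have h1 := card_mul_norm_fmean_sub_sq_le (hne l) (hsub l)
    have h2 := mul_le_mul_of_nonneg_right (hbig l) (sq_nonneg ‖fmean (Qs l) - fmean Q‖)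
    have h3 : ε / (4 * j) * ‖fmean (Qs l) - fmean Q‖ ^ 2 ≤ fvar Q := by
      refine le_of_mul_le_mul_left ?_ hq
      linarith
    refine (sq_le_sq₀ (norm_nonneg _) (by positivity)).1 ?_
    rw [mul_pow, mul_pow, Real.sq_sqrt (by positivity), Real.sq_sqrt hv]
    calc ‖fmean (Qs l) - fmean Q‖ ^ 2
        = 4 * j / ε * (ε / (4 * j) * ‖fmean (Qs l) - fmean Q‖ ^ 2) := by field_simp
      _ ≤ 4 * j / ε * fvar Q := by gcongr
      _ = 2 ^ 2 * (j / ε) * fvar Q := by ring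
  refine ⟨key, fun l l' => ?_⟩
  have h := norm_sub_le_norm_sub_add_norm_sub (fmean (Qs l)) (fmean Q) (fmean (Qs l'))
  rw [norm_sub_rev (fmean Q)] at h
  linarith [key l, key l']
end

section
/- Let Q be a nonempty finite set of points in ℝ^d, let 0 < ε ≤ 1, and let Q' ⊆ Q be a nonempty subset with |Q'| ≥ (1 − ε/4)·|Q|. Let o and o' be the means of Q and Q', and let δ² and (δ')² be the variances of Q and Q', respectively. Then: (i) (δ')² ≤ δ² / (1 − ε/4); (ii) ||o' − o|| ≤ √((ε/4)/(1 − ε/4)) · δ; and (iii) every point τ ∈ ℝ^d with ||τ − o'||² ≤ (ε/16)·(δ')² satisfies ||τ − o||² ≤ ε·δ². -/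
lemma sum_sub_eq {d : ℕ} {Q : Finset (EuclideanSpace ℝ (Fin d))} (hQ : Q.Nonempty)
    (x : EuclideanSpace ℝ (Fin d)) :
    ∑ q ∈ Q, (q - x) = (Q.card : ℝ) • (fmean Q - x) := by
  have h : (Q.card : ℝ) ≠ 0 := by exact_mod_cast hQ.card_pos.ne'
  rw [Finset.sum_sub_distrib, fmean, smul_sub, smul_inv_smul₀ h, Finset.sum_const,
    Nat.cast_smul_eq_nsmul]

lemma card_mul_fvar {d : ℕ} {Q : Finset (EuclideanSpace ℝ (Fin d))} (hQ : Q.Nonempty) :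
    ∑ q ∈ Q, ‖q - fmean Q‖ ^ 2 = Q.card * fvar Q := by
  have h : (Q.card : ℝ) ≠ 0 := by exact_mod_cast hQ.card_pos.ne'
  rw [fvar, mul_inv_cancel_left₀ h]

/-- Parallel-axis (Huygens–Steiner) identity. -/
lemma sum_norm_sub_sq {d : ℕ} {Q : Finset (EuclideanSpace ℝ (Fin d))} (hQ : Q.Nonempty)
    (x : EuclideanSpace ℝ (Fin d)) :
    ∑ q ∈ Q, ‖q - x‖ ^ 2 = Q.card * fvar Q + Q.card * ‖fmean Q - x‖ ^ 2 := by
  have h1 : ∀ q ∈ Q, ‖q - x‖ ^ 2 = ‖q - fmean Q‖ ^ 2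
      + 2 * inner ℝ (q - fmean Q) (fmean Q - x) + ‖fmean Q - x‖ ^ 2 := by
    intro q _
    rw [← norm_add_sq_real, sub_add_sub_cancel]
  rw [Finset.sum_congr rfl h1, Finset.sum_add_distrib, Finset.sum_add_distrib, ← Finset.mul_sum,
    ← sum_inner, sum_sub_eq hQ, card_mul_fvar hQ]
  simp

/-- Cauchy–Schwarz for a finite sum of vectors. -/
lemma norm_sum_sq_le {d : ℕ} (R : Finset (EuclideanSpace ℝ (Fin d)))
    (x : EuclideanSpace ℝ (Fin d)) :
    ‖∑ q ∈ R, (q - x)‖ ^ 2 ≤ R.card * ∑ q ∈ R, ‖q - x‖ ^ 2 :=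
  (pow_le_pow_left₀ (norm_nonneg _) (norm_sum_le _ _) 2).trans sq_sum_le_card_mul_sum_sq

theorem stmt_7 {d : ℕ} (Q Q' : Finset (EuclideanSpace ℝ (Fin d)))
    (hQ : Q.Nonempty) (hQ' : Q'.Nonempty) (hsub : Q' ⊆ Q)
    (ε : ℝ) (hε0 : 0 < ε) (hε1 : ε ≤ 1)
    (hcard : (1 - ε / 4) * Q.card ≤ (Q'.card : ℝ)) :
    fvar Q' ≤ fvar Q / (1 - ε / 4) ∧
    ‖fmean Q' - fmean Q‖ ≤ Real.sqrt ((ε / 4) / (1 - ε / 4)) * Real.sqrt (fvar Q) ∧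
    ∀ τ : EuclideanSpace ℝ (Fin d),
      ‖τ - fmean Q'‖ ^ 2 ≤ (ε / 16) * fvar Q' → ‖τ - fmean Q‖ ^ 2 ≤ ε * fvar Q := by
  have hn : (0 : ℝ) < Q.card := by exact_mod_cast hQ.card_pos
  have hm : (0 : ℝ) < Q'.card := by exact_mod_cast hQ'.card_pos
  have hV : 0 ≤ fvar Q := by unfold fvar; positivity
  have hV' : 0 ≤ fvar Q' := by unfold fvar; positivity
  have hk : 0 < 1 - ε / 4 := by linarith
  have hsplit := Finset.sum_sdiff (f := fun q => ‖q - fmean Q‖ ^ 2) hsub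
  have hvec := Finset.sum_sdiff (f := fun q => q - fmean Q) hsub
  have hcs := norm_sum_sq_le (Q \ Q') (fmean Q)
  have hr : ((Q \ Q').card : ℝ) = Q.card - Q'.card := by
    rw [Finset.card_sdiff_of_subset hsub, Nat.cast_sub (Finset.card_le_card hsub)]
  have hr0 : (0 : ℝ) ≤ (Q \ Q').card := Nat.cast_nonneg _
  have hT : 0 ≤ ∑ q ∈ Q \ Q', ‖q - fmean Q‖ ^ 2 := by positivity
  rw [sum_sub_eq hQ, sum_sub_eq hQ', sub_self, smul_zero] at hvec
  rw [eq_neg_of_add_eq_zero_left hvec, norm_neg, norm_smul, mul_pow, Real.norm_natCast, hr] at hcs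
  rw [sum_norm_sub_sq hQ', card_mul_fvar hQ] at hsplit
  rw [hr] at hr0
  generalize (∑ q ∈ Q \ Q', ‖q - fmean Q‖ ^ 2) = T at *
  have hC : 0 ≤ ‖fmean Q' - fmean Q‖ ^ 2 := by positivity
  generalize hCe : ‖fmean Q' - fmean Q‖ ^ 2 = C at *
  generalize (Q.card : ℝ) = n at *
  generalize (Q'.card : ℝ) = m at *
  have h1 : (1 - ε / 4) * fvar Q' ≤ fvar Q := by
    have : n * ((1 - ε / 4) * fvar Q') ≤ n * fvar Q := by
      nlinarith [mul_le_mul_of_nonneg_right hcard hV', mul_nonneg hm.le hC]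
    exact le_of_mul_le_mul_left this hn
  have h2 : m * C ≤ (n - m) * fvar Q := by
    have : n * (m * C) ≤ n * ((n - m) * fvar Q) := by
      have e : n * ((n - m) * fvar Q) = (n - m) * (T + (m * fvar Q' + m * C)) := by
        rw [hsplit]; ring
      nlinarith [mul_nonneg hr0 (mul_nonneg hm.le hV')]
    exact le_of_mul_le_mul_left this hn
  have h3 : (1 - ε / 4) * C ≤ ε / 4 * fvar Q := by
    have hnm : (1 - ε / 4) * (n - m) ≤ ε / 4 * m := by linarith
    have : m * ((1 - ε / 4) * C) ≤ m * (ε / 4 * fvar Q) := by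
      nlinarith [mul_le_mul_of_nonneg_left h2 hk.le, mul_le_mul_of_nonneg_right hnm hV]
    exact le_of_mul_le_mul_left this hm
  refine ⟨?_, ?_, ?_⟩
  · rw [le_div_iff₀ hk]; linarith
  · rw [← Real.sqrt_mul (by positivity)]
    apply Real.le_sqrt_of_sq_le
    rw [hCe, div_mul_eq_mul_div, le_div_iff₀ hk]; linarith
  · intro τ hτ
    have htri : ‖τ - fmean Q‖ ^ 2 ≤ 2 * ‖τ - fmean Q'‖ ^ 2 + 2 * C := by
      have h := norm_sub_le_norm_sub_add_norm_sub τ (fmean Q') (fmean Q)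
      have h' := pow_le_pow_left₀ (norm_nonneg _) h 2
      rw [← hCe]
      nlinarith [sq_nonneg (‖τ - fmean Q'‖ - ‖fmean Q' - fmean Q‖)]
    have hV3 : fvar Q' ≤ 4 / 3 * fvar Q := by nlinarith
    have hC3 : C ≤ ε / 3 * fvar Q := by nlinarith
    nlinarith [mul_le_mul_of_nonneg_left hV3 hε0.le, mul_nonneg hε0.le hV]
end

section
/- Let n ≥ 1, ε > 0, j ≥ 1, δ_opt ≥ 0, and let Opt_j be a nonempty finite set of points in ℝ^d with |Opt_j| ≤ n. Let m_j be the mean of Opt_j, δ_j² its variance, and β_j = |Opt_j|/n. If a point p_{v_j} ∈ ℝ^d satisfies ||p_{v_j} − m_j|| ≤ ε·δ_j + (1+ε)·j·√(ε/β_j)·δ_opt, then ∑_{p∈Opt_j} ||p − p_{v_j}||² ≤ (1 + 2ε²)·|Opt_j|·δ_j² + 2(1+ε)²·j²·ε·n·δ_opt². -/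
/-- Parallel axis identity: the cross term vanishes because deviations from the mean sum to zero. -/
lemma sum_norm_sub_sq_eq {d : ℕ} (Q : Finset (EuclideanSpace ℝ (Fin d))) (hQ : Q.Nonempty)
    (x : EuclideanSpace ℝ (Fin d)) :
    ∑ p ∈ Q, ‖p - x‖ ^ 2 = Q.card * fvar Q + Q.card * ‖x - fmean Q‖ ^ 2 := by
  have hc : (Q.card : ℝ) ≠ 0 := by exact_mod_cast hQ.card_pos.ne'
  have hzero : ∑ p ∈ Q, (p - fmean Q) = 0 := by
    rw [Finset.sum_sub_distrib, Finset.sum_const, ← Nat.cast_smul_eq_nsmul ℝ, fmean,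
      smul_inv_smul₀ hc, sub_self]
  have hvar : Q.card * fvar Q = ∑ p ∈ Q, ‖p - fmean Q‖ ^ 2 := by
    rw [fvar, mul_inv_cancel_left₀ hc]
  have hterm : ∀ p ∈ Q, ‖p - x‖ ^ 2 =
      ‖p - fmean Q‖ ^ 2 - 2 * inner ℝ (p - fmean Q) (x - fmean Q) + ‖x - fmean Q‖ ^ 2 := by
    intro p _
    rw [← norm_sub_sq_real, sub_sub_sub_cancel_right]
  rw [Finset.sum_congr rfl hterm, Finset.sum_add_distrib, Finset.sum_sub_distrib,
    ← Finset.mul_sum, ← sum_inner, hzero, inner_zero_left, Finset.sum_const, nsmul_eq_mul, hvar]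
  ring

theorem stmt_8 {d : ℕ} (n j : ℕ) (hn : 1 ≤ n) (hj : 1 ≤ j)
    (ε δopt : ℝ) (hε : 0 < ε) (hδopt : 0 ≤ δopt)
    (Optj : Finset (EuclideanSpace ℝ (Fin d))) (hOptj : Optj.Nonempty)
    (hcard : Optj.card ≤ n)
    (pvj : EuclideanSpace ℝ (Fin d))
    (hpvj : ‖pvj - fmean Optj‖ ≤
      ε * Real.sqrt (fvar Optj) +
        (1 + ε) * j * Real.sqrt (ε / ((Optj.card : ℝ) / n)) * δopt) :
    ∑ p ∈ Optj, ‖p - pvj‖ ^ 2 ≤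
      (1 + 2 * ε ^ 2) * Optj.card * fvar Optj +
        2 * (1 + ε) ^ 2 * j ^ 2 * ε * n * δopt ^ 2 := by
  have hc : (0 : ℝ) < Optj.card := by exact_mod_cast hOptj.card_pos
  have hn' : (0 : ℝ) < n := by exact_mod_cast hn
  have hvar : 0 ≤ fvar Optj := by unfold fvar; positivity
  have hs1 := Real.sq_sqrt hvar
  have hs2 : Real.sqrt (ε / ((Optj.card : ℝ) / n)) ^ 2 = ε / ((Optj.card : ℝ) / n) :=
    Real.sq_sqrt (by positivity)
  have hnorm : ‖pvj - fmean Optj‖ ^ 2 ≤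
      2 * (ε ^ 2 * fvar Optj + (1 + ε) ^ 2 * j ^ 2 * (ε / ((Optj.card : ℝ) / n)) * δopt ^ 2) := by
    refine (pow_le_pow_left₀ (norm_nonneg _) hpvj 2).trans (add_sq_le.trans_eq ?_)
    simp only [mul_pow, hs1, hs2]
  rw [sum_norm_sub_sq_eq Optj hOptj]
  calc Optj.card * fvar Optj + Optj.card * ‖pvj - fmean Optj‖ ^ 2
      ≤ Optj.card * fvar Optj + Optj.card * (2 * (ε ^ 2 * fvar Optj +
          (1 + ε) ^ 2 * j ^ 2 * (ε / ((Optj.card : ℝ) / n)) * δopt ^ 2)) := by gcongr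
    _ = _ := by
      field_simp
      ring
end

section
/- Let n ≥ 1 and k ≥ j ≥ 2 be integers, let ε ∈ (0, 1/(4k²)), and let δ_opt > 0. Let Opt_l be a nonempty finite set of points in ℝ^d with mean m_l and variance δ_l², let β_l = |Opt_l|/n, and let β_j be a real number with 0 < β_j ≤ β_l. Assume β_l·δ_l² ≤ δ_opt². Let p_{v_l} ∈ ℝ^d satisfy ||p_{v_l} − m_l|| ≤ ε·δ_l + (1+ε)·(j−1)·√(ε/β_l)·δ_opt, and let r_j be a real number with r_j ≥ j·√(ε/β_j)·δ_opt. Then the number of points p ∈ Opt_l with ||p − p_{v_l}|| ≥ r_j is at most 4·β_j·n/ε. -/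
/-- Chebyshev's inequality for the uniform distribution on a finite set of points. -/
lemma card_mul_sq_le_fvar {d : ℕ} (Q S : Finset (EuclideanSpace ℝ (Fin d))) (hS : S ⊆ Q)
    (hQ : Q.Nonempty) (t : ℝ) (ht : 0 ≤ t) (h : ∀ p ∈ S, t ≤ ‖p - fmean Q‖) :
    (S.card : ℝ) * t ^ 2 ≤ Q.card * fvar Q := by
  have hc : (Q.card : ℝ) ≠ 0 := by exact_mod_cast hQ.card_pos.ne'
  calc (S.card : ℝ) * t ^ 2 = ∑ p ∈ S, t ^ 2 := by simp
    _ ≤ ∑ p ∈ S, ‖p - fmean Q‖ ^ 2 :=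
        Finset.sum_le_sum fun p hp => pow_le_pow_left₀ ht (h p hp) 2
    _ ≤ ∑ p ∈ Q, ‖p - fmean Q‖ ^ 2 :=
        Finset.sum_le_sum_of_subset_of_nonneg hS fun _ _ _ => by positivity
    _ = Q.card * fvar Q := by rw [fvar, mul_inv_cancel_left₀ hc]

open Classical in
theorem stmt_10 {d : ℕ} (n k j : ℕ) (hn : 1 ≤ n) (hj : 2 ≤ j) (hjk : j ≤ k)
    (ε δopt : ℝ) (hε0 : 0 < ε) (hε1 : ε < 1 / (4 * (k : ℝ) ^ 2)) (hδopt : 0 < δopt)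
    (Optl : Finset (EuclideanSpace ℝ (Fin d))) (hOptl : Optl.Nonempty)
    (βj : ℝ) (hβj0 : 0 < βj) (hβjl : βj ≤ (Optl.card : ℝ) / n)
    (hvar : ((Optl.card : ℝ) / n) * fvar Optl ≤ δopt ^ 2)
    (pvl : EuclideanSpace ℝ (Fin d))
    (hpvl : ‖pvl - fmean Optl‖ ≤
      ε * Real.sqrt (fvar Optl) +
        (1 + ε) * ((j : ℝ) - 1) * Real.sqrt (ε / ((Optl.card : ℝ) / n)) * δopt)
    (rj : ℝ) (hrj : (j : ℝ) * Real.sqrt (ε / βj) * δopt ≤ rj) :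
    ((Optl.filter fun p => rj ≤ ‖p - pvl‖).card : ℝ) ≤ 4 * βj * n / ε := by
  have hn0 : (0 : ℝ) < n := by exact_mod_cast hn
  have hc : (0 : ℝ) < Optl.card := by exact_mod_cast hOptl.card_pos
  have hj2 : (2 : ℝ) ≤ j := by exact_mod_cast hj
  have hjk' : (j : ℝ) ≤ k := by exact_mod_cast hjk
  have hV : 0 ≤ fvar Optl := by unfold fvar; positivity
  have hmass : (Optl.card : ℝ) * fvar Optl ≤ n * δopt ^ 2 := by
    rw [div_mul_eq_mul_div, div_le_iff₀ hn0] at hvar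
    linarith
  have hβ : (0 : ℝ) < (Optl.card : ℝ) / n := by positivity
  generalize (Optl.card : ℝ) / n = β at *
  set a := √(ε / βj) * δopt with ha
  set b := √(ε / β) * δopt with hb
  have ha0 : 0 < a := by positivity
  have hb0 : 0 < b := by positivity
  have hba : b ≤ a := by
    rw [ha, hb]; gcongr
  have ha2 : a ^ 2 = ε / βj * δopt ^ 2 := by
    rw [ha, mul_pow, Real.sq_sqrt (by positivity)]
  have hb2 : b ^ 2 = ε / β * δopt ^ 2 := by
    rw [hb, mul_pow, Real.sq_sqrt (by positivity)]
  have hsε : √ε ^ 2 = ε := Real.sq_sqrt hε0.le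
  have hσ : √(fvar Optl) * √ε ≤ b := by
    refine (sq_le_sq₀ (by positivity) hb0.le).mp ?_
    rw [mul_pow, hsε, Real.sq_sqrt hV, hb2, div_mul_eq_mul_div, le_div_iff₀ hβ]
    nlinarith
  have hεk : ε * (4 * (k : ℝ) ^ 2) < 1 := by
    rwa [lt_div_iff₀ (by nlinarith)] at hε1
  have hε16 : ε ≤ 1 / 16 := by nlinarith
  have hs4 : √ε ≤ 1 / 4 := by
    rw [Real.sqrt_le_left (by norm_num)]; linarith
  have hεj : ε * ((j : ℝ) - 1) ≤ 1 / 8 := by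
    -- `8 * (j - 1) ≤ 8 * (k - 1) ≤ 4 * k ^ 2`
    nlinarith [mul_nonneg hε0.le (sq_nonneg ((k : ℝ) - 1)), mul_le_mul_of_nonneg_left hjk' hε0.le]
  have hdist : ‖pvl - fmean Optl‖ ≤ (j - 1 / 2) * a := by
    have h1 : ε * √(fvar Optl) ≤ 1 / 4 * b := by
      calc ε * √(fvar Optl) = √ε * (√(fvar Optl) * √ε) := by
            rw [← mul_assoc, mul_right_comm, ← sq, hsε]
        _ ≤ 1 / 4 * b := by gcongr
    have h2 : (1 + ε) * ((j : ℝ) - 1) * √(ε / β) * δopt ≤ (j - 1 + 1 / 8) * b := by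
      rw [mul_assoc, ← hb]
      gcongr
      linarith
    have h3 : ((j : ℝ) - 1 / 2) * b ≤ (j - 1 / 2) * a :=
      mul_le_mul_of_nonneg_left hba (by linarith)
    nlinarith
  have hcheb := card_mul_sq_le_fvar Optl (Optl.filter fun p => rj ≤ ‖p - pvl‖)
    (Finset.filter_subset _ _) hOptl (a / 2) (by positivity) (by
      intro p hp
      have hp' := (Finset.mem_filter.mp hp).2
      have htri := norm_sub_le_norm_sub_add_norm_sub p (fmean Optl) pvl
      rw [norm_sub_rev (fmean Optl) pvl] at htri
      rw [mul_assoc, ← ha] at hrj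
      linarith)
  have hfin := hcheb.trans hmass
  rw [div_pow, ha2] at hfin
  rw [le_div_iff₀ hε0]
  field_simp at hfin
  linarith
end

section
/- Let p_1, …, p_n be points in ℝ^d, let k ≥ 1, let 𝔽 be a nonempty set of labelings σ : {1,…,n} → {1,…,k}, and let δ_opt² be the optimal constrained k-means value of this instance. Let C = {c_1,…,c_k} ⊂ ℝ^d, for each i let p̃_i be a point of C nearest to p_i, let ω = (1/n)·∑_{i=1}^n ||p_i − p̃_i||², and let δ̃_opt² be the optimal constrained k-means value of the instance p̃_1, …, p̃_n with the same feasible labelings 𝔽. Then δ̃_opt² ≤ 2ω + 2δ_opt². -/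
theorem stmt_11 {d n k : ℕ} (hk : 1 ≤ k) (p : Fin n → EuclideanSpace ℝ (Fin d))
    (F : Set (Fin n → Fin k)) (hF : F.Nonempty)
    (c : Fin k → EuclideanSpace ℝ (Fin d))
    (pt : Fin n → EuclideanSpace ℝ (Fin d))
    (hnear : ∀ i, (∃ j, pt i = c j) ∧ ∀ j, ‖p i - pt i‖ ≤ ‖p i - c j‖) :
    kmeansOptC pt F ≤
      2 * ((n : ℝ)⁻¹ * ∑ i, ‖p i - pt i‖ ^ 2) + 2 * kmeansOptC p F := by
  -- In this form every feasible cost of `p` is bounded below, so `le_csInf` applies.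
  suffices h : (kmeansOptC pt F - 2 * ((n : ℝ)⁻¹ * ∑ i, ‖p i - pt i‖ ^ 2)) / 2 ≤ kmeansOptC p F by
    linarith
  obtain ⟨σ₀, hσ₀⟩ := hF
  refine le_csInf ⟨_, σ₀, hσ₀, c, rfl⟩ ?_
  rintro v ⟨σ, hσ, m, rfl⟩
  have hopt : kmeansOptC pt F ≤ (n : ℝ)⁻¹ * ∑ i, ‖pt i - m (σ i)‖ ^ 2 := by
    refine csInf_le ⟨0, ?_⟩ ⟨σ, hσ, m, rfl⟩
    rintro v ⟨τ, _, m', rfl⟩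
    positivity
  have hpt : ∀ i, ‖pt i - m (σ i)‖ ^ 2 ≤ 2 * ‖p i - pt i‖ ^ 2 + 2 * ‖p i - m (σ i)‖ ^ 2 := by
    intro i
    have htri : ‖pt i - m (σ i)‖ ≤ ‖p i - pt i‖ + ‖p i - m (σ i)‖ := by
      rw [norm_sub_rev (p i) (pt i)]
      exact norm_sub_le_norm_sub_add_norm_sub _ _ _
    nlinarith [norm_nonneg (pt i - m (σ i)), sq_nonneg (‖p i - pt i‖ - ‖p i - m (σ i)‖)]
  have hsum : (n : ℝ)⁻¹ * ∑ i, ‖pt i - m (σ i)‖ ^ 2 ≤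
      (n : ℝ)⁻¹ * ∑ i, (2 * ‖p i - pt i‖ ^ 2 + 2 * ‖p i - m (σ i)‖ ^ 2) :=
    mul_le_mul_of_nonneg_left (Finset.sum_le_sum fun i _ => hpt i) (by positivity)
  rw [Finset.sum_add_distrib, ← Finset.mul_sum, ← Finset.mul_sum] at hsum
  linarith
end

section
/- Let p_1, …, p_n be points in ℝ^d, let k ≥ 1, and let 𝔽 be a nonempty set of labelings σ : {1,…,n} → {1,…,k}. Let C = {c_1,…,c_k} ⊂ ℝ^d, for each i let p̃_i be a point of C nearest to p_i, let ω = (1/n)·∑_{i=1}^n ||p_i − p̃_i||², and let δ̃_opt² be the optimal constrained k-means value of the instance p̃_1, …, p̃_n with the same feasible labelings 𝔽. Then the restricted constrained optimum of the original instance satisfies δ_opt²([C]^k) ≤ 2ω + 8δ̃_opt². -/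
/-- The pointwise estimate, with `q = p i`, `x = pt i`, `y` an arbitrary center and `m` a point of
the restricted center set nearest to `y`; `hm` holds because `x` also lies in that set. -/
lemma norm_sub_sq_le_of_nearest {E : Type*} [SeminormedAddCommGroup E] (q x y m : E)
    (hm : ‖y - m‖ ≤ ‖y - x‖) :
    ‖q - m‖ ^ 2 ≤ 2 * ‖q - x‖ ^ 2 + 8 * ‖x - y‖ ^ 2 := by
  have h1 : ‖q - m‖ ≤ ‖q - x‖ + ‖x - m‖ := norm_sub_le_norm_sub_add_norm_sub q x m
  have h2 : ‖x - m‖ ≤ ‖x - y‖ + ‖y - m‖ := norm_sub_le_norm_sub_add_norm_sub x y m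
  rw [norm_sub_rev y x] at hm
  have h3 : ‖q - m‖ ≤ ‖q - x‖ + 2 * ‖x - y‖ := by linarith
  have h4 := pow_le_pow_left₀ (norm_nonneg _) h3 2
  nlinarith [sq_nonneg (‖q - x‖ - 2 * ‖x - y‖)]

theorem stmt_12 {d n k : ℕ} (hk : 1 ≤ k) (p : Fin n → EuclideanSpace ℝ (Fin d))
    (F : Set (Fin n → Fin k)) (hF : F.Nonempty)
    (c : Fin k → EuclideanSpace ℝ (Fin d))
    (pt : Fin n → EuclideanSpace ℝ (Fin d))
    (hnear : ∀ i, (∃ j, pt i = c j) ∧ ∀ j, ‖p i - pt i‖ ≤ ‖p i - c j‖) :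
    kmeansOptCRestricted p F (Set.range c) ≤
      2 * ((n : ℝ)⁻¹ * ∑ i, ‖p i - pt i‖ ^ 2) + 8 * kmeansOptC pt F := by
  have : Nonempty (Fin k) := ⟨⟨0, hk⟩⟩
  suffices h : (kmeansOptCRestricted p F (Set.range c) -
      2 * ((n : ℝ)⁻¹ * ∑ i, ‖p i - pt i‖ ^ 2)) / 8 ≤ kmeansOptC pt F by linarith
  obtain ⟨σ₀, hσ₀⟩ := hF
  refine le_csInf ⟨_, σ₀, hσ₀, c, rfl⟩ ?_
  rintro v ⟨σ, hσ, b, rfl⟩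
  -- `c (f j)` is a point of `Set.range c` nearest to `b j`.
  choose f hf using fun j => Finite.exists_min fun l => ‖b j - c l‖
  have hR : kmeansOptCRestricted p F (Set.range c) ≤
      (n : ℝ)⁻¹ * ∑ i, ‖p i - c (f (σ i))‖ ^ 2 := by
    refine csInf_le ⟨0, ?_⟩ ⟨σ, hσ, fun j => c (f j), fun j => ⟨f j, rfl⟩, rfl⟩
    rintro v ⟨_, _, _, _, rfl⟩
    positivity
  have hS : ∑ i, ‖p i - c (f (σ i))‖ ^ 2 ≤
      2 * ∑ i, ‖p i - pt i‖ ^ 2 + 8 * ∑ i, ‖pt i - b (σ i)‖ ^ 2 := by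
    rw [Finset.mul_sum, Finset.mul_sum, ← Finset.sum_add_distrib]
    refine Finset.sum_le_sum fun i _ => norm_sub_sq_le_of_nearest _ _ _ _ ?_
    obtain ⟨j, hj⟩ := (hnear i).1
    rw [hj]
    exact hf (σ i) j
  have hn : (0 : ℝ) ≤ (n : ℝ)⁻¹ := by positivity
  have hM := mul_le_mul_of_nonneg_left hS hn
  linarith
end

section
/- Let p_1, …, p_n be points in ℝ^d, let k ≥ 1, and let 𝔽 be a nonempty set of labelings σ : {1,…,n} → {1,…,k}. Let C = {c_1,…,c_k} ⊂ ℝ^d, for each i let p̃_i be a point of C nearest to p_i, let ω = (1/n)·∑_{i=1}^n ||p_i − p̃_i||, and let μ̃_opt be the optimal constrained k-median value of the instance p̃_1, …, p̃_n with the same feasible labelings 𝔽. Then the restricted constrained optimum of the original instance satisfies μ_opt([C]^k) ≤ ω + 2μ̃_opt. -/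
theorem stmt_14 {d n k : ℕ} (hk : 1 ≤ k) (p : Fin n → EuclideanSpace ℝ (Fin d))
    (F : Set (Fin n → Fin k)) (hF : F.Nonempty)
    (c : Fin k → EuclideanSpace ℝ (Fin d))
    (pt : Fin n → EuclideanSpace ℝ (Fin d))
    (hnear : ∀ i, (∃ j, pt i = c j) ∧ ∀ j, ‖p i - pt i‖ ≤ ‖p i - c j‖) :
    kmedianOptCRestricted p F (Set.range c) ≤
      ((n : ℝ)⁻¹ * ∑ i, ‖p i - pt i‖) + 2 * kmedianOptC pt F := by
  have hmin : ∀ b : EuclideanSpace ℝ (Fin d), ∃ j, ∀ l, ‖b - c j‖ ≤ ‖b - c l‖ := by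
    have : Nonempty (Fin k) := ⟨⟨0, hk⟩⟩
    exact fun b => Finite.exists_min fun j => ‖b - c j‖
  -- `m b` is the index of a point of `C` nearest to `b`.
  choose m hm using hmin
  have key : (kmedianOptCRestricted p F (Set.range c) - (n : ℝ)⁻¹ * ∑ i, ‖p i - pt i‖) / 2
      ≤ kmedianOptC pt F := by
    obtain ⟨σ₀, hσ₀⟩ := hF
    refine le_csInf ⟨_, σ₀, hσ₀, c, rfl⟩ ?_
    rintro v ⟨σ, hσ, b, rfl⟩
    have h1 : kmedianOptCRestricted p F (Set.range c) ≤
        (n : ℝ)⁻¹ * ∑ i, ‖p i - c (m (b (σ i)))‖ := by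
      refine csInf_le ⟨0, ?_⟩ ⟨σ, hσ, fun j => c (m (b j)), fun j => ⟨_, rfl⟩, rfl⟩
      rintro w ⟨τ, -, e, -, rfl⟩
      positivity
    have h2 : ∑ i, ‖p i - c (m (b (σ i)))‖ ≤
        ∑ i, ‖p i - pt i‖ + 2 * ∑ i, ‖pt i - b (σ i)‖ := by
      rw [Finset.mul_sum, ← Finset.sum_add_distrib]
      refine Finset.sum_le_sum fun i _ => ?_
      obtain ⟨j, hj⟩ := (hnear i).1
      -- `pt i` lies in `C`, so it competes with the snapped centre.
      have h3 : ‖b (σ i) - c (m (b (σ i)))‖ ≤ ‖pt i - b (σ i)‖ := by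
        rw [norm_sub_rev (pt i), hj]
        exact hm _ j
      have h4 := norm_sub_le_norm_sub_add_norm_sub (p i) (pt i) (c (m (b (σ i))))
      have h5 := norm_sub_le_norm_sub_add_norm_sub (pt i) (b (σ i)) (c (m (b (σ i))))
      linarith
    have h6 := mul_le_mul_of_nonneg_left h2 (by positivity : (0 : ℝ) ≤ (n : ℝ)⁻¹)
    linarith
  linarith
end

section
/- Let P be a nonempty finite set of points in ℝ^d, let ε ∈ (0, 1/5), and let P_1, …, P_j be pairwise disjoint nonempty subsets of P with |P \ (P_1 ∪ ⋯ ∪ P_j)| ≤ ε|P|. For each 1 ≤ l ≤ j let o_l be a geometric median of P_l, and assume P_l is contained in the closed ball of radius L ≥ 0 centered at o_l. Let o be a geometric median of P, let F be the affine span of {o_1,…,o_j}, and let õ be the orthogonal projection of o onto F. Then ||o − õ|| ≤ L + (1/(1−ε)) · (1/|P|) · ∑_{p∈P} ||o − p||. -/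
/-!
Every point of `P_l` is within `L` of `o_l`, which lies in the affine span `F`. Since `otil` is the
point of `F` nearest to `o`, such a point is at distance at least `‖o - otil‖ - L` from `o`.
At least `(1 - ε) |P|` points of `P` lie in some `P_l`, so summing this lower bound over them gives
`(1 - ε) |P| (‖o - otil‖ - L) ≤ ∑ p ∈ P, ‖o - p‖`, which is the claim (trivial when
`‖o - otil‖ ≤ L`).
-/

/-- `o` is a geometric median of the finite point set `P`. -/
def IsGeomMedian {d : ℕ} (P : Finset (EuclideanSpace ℝ (Fin d)))
    (o : EuclideanSpace ℝ (Fin d)) : Prop :=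
  ∀ x : EuclideanSpace ℝ (Fin d), ∑ p ∈ P, ‖p - o‖ ≤ ∑ p ∈ P, ‖p - x‖

open Classical in
theorem stmt_15 {d j : ℕ} (P : Finset (EuclideanSpace ℝ (Fin d))) (hP : P.Nonempty)
    (ε L : ℝ) (hε0 : 0 < ε) (hε1 : ε < 1 / 5) (hL : 0 ≤ L)
    (Ps : Fin j → Finset (EuclideanSpace ℝ (Fin d)))
    (hne : ∀ l, (Ps l).Nonempty) (hsub : ∀ l, Ps l ⊆ P)
    (hdisj : ∀ l₁ l₂, l₁ ≠ l₂ → Disjoint (Ps l₁) (Ps l₂))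
    (hsmall : ((P \ Finset.univ.biUnion Ps).card : ℝ) ≤ ε * P.card)
    (os : Fin j → EuclideanSpace ℝ (Fin d))
    (hmed : ∀ l, IsGeomMedian (Ps l) (os l))
    (hball : ∀ l, ∀ p ∈ Ps l, ‖p - os l‖ ≤ L)
    (o : EuclideanSpace ℝ (Fin d)) (ho : IsGeomMedian P o)
    (otil : EuclideanSpace ℝ (Fin d))
    (hmem : otil ∈ affineSpan ℝ (Set.range os))
    (hproj : ∀ y ∈ (affineSpan ℝ (Set.range os) : Set (EuclideanSpace ℝ (Fin d))),
      ‖o - otil‖ ≤ ‖o - y‖) :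
    ‖o - otil‖ ≤ L + (1 / (1 - ε)) * ((P.card : ℝ)⁻¹ * ∑ p ∈ P, ‖o - p‖) := by
  set U := Finset.univ.biUnion Ps with hU
  have hUP : U ⊆ P := Finset.biUnion_subset.2 fun l _ => hsub l
  have hPpos : (0 : ℝ) < P.card := by exact_mod_cast hP.card_pos
  have hcard : ((P \ U).card : ℝ) + U.card = P.card := by
    exact_mod_cast Finset.card_sdiff_add_card_eq_card hUP
  have hpt : ∀ p ∈ U, ‖o - otil‖ - L ≤ ‖o - p‖ := by
    intro p hp
    obtain ⟨l, -, hl⟩ := Finset.mem_biUnion.1 hp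
    have h1 := hproj (os l) (subset_affineSpan ℝ _ ⟨l, rfl⟩)
    have h2 := hball l p hl
    have h3 := norm_sub_le_norm_sub_add_norm_sub o p (os l)
    linarith
  have hsum : (U.card : ℝ) * (‖o - otil‖ - L) ≤ ∑ p ∈ P, ‖o - p‖ := by
    calc (U.card : ℝ) * (‖o - otil‖ - L) = ∑ _p ∈ U, (‖o - otil‖ - L) := by
          rw [Finset.sum_const, nsmul_eq_mul]
      _ ≤ ∑ p ∈ U, ‖o - p‖ := Finset.sum_le_sum hpt
      _ ≤ ∑ p ∈ P, ‖o - p‖ :=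
        Finset.sum_le_sum_of_subset_of_nonneg hUP fun _ _ _ => norm_nonneg _
  have hS : 0 ≤ ∑ p ∈ P, ‖o - p‖ := Finset.sum_nonneg fun _ _ => norm_nonneg _
  have hε : 0 < 1 - ε := by linarith
  suffices h : ‖o - otil‖ - L ≤ (∑ p ∈ P, ‖o - p‖) / ((1 - ε) * P.card) by
    have h' : (1 / (1 - ε)) * ((P.card : ℝ)⁻¹ * ∑ p ∈ P, ‖o - p‖)
        = (∑ p ∈ P, ‖o - p‖) / ((1 - ε) * P.card) := by
      field_simp
    linarith
  rcases le_total (‖o - otil‖ - L) 0 with h | h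
  · exact h.trans (by positivity)
  · rw [le_div_iff₀ (by positivity), mul_comm]
    exact (mul_le_mul_of_nonneg_right (by linarith) h).trans hsum
end

section
/- Let P be a nonempty finite set of points in ℝ^d, let ε ∈ (0, 1/5), and let P_1, …, P_j be pairwise disjoint nonempty subsets of P with |P \ (P_1 ∪ ⋯ ∪ P_j)| ≤ ε|P|. For each 1 ≤ l ≤ j let o_l be a geometric median of P_l, and assume P_l is contained in the closed ball of radius L ≥ 0 centered at o_l. Let o be a geometric median of P, let F be the affine span of {o_1,…,o_j}, and let õ be the orthogonal projection of o onto F. Then (1/|P|) · ∑_{p∈P} ||p − õ|| ≤ (1/(1−ε)) · (1/|P|) · ∑_{p∈P} ||p − o|| + L. -/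
/-- First-order optimality: a point minimizing the norm along the line through `v` in direction `w`
is orthogonal to `w`. -/
lemma inner_eq_zero_of_norm_le {E : Type*} [NormedAddCommGroup E] [InnerProductSpace ℝ E]
    (v w : E) (h : ∀ t : ℝ, ‖v‖ ≤ ‖v - t • w‖) : inner ℝ v w = 0 := by
  have key : ∀ t : ℝ, 0 ≤ t ^ 2 * ‖w‖ ^ 2 - 2 * t * inner ℝ v w := by
    intro t
    have h1 := pow_le_pow_left₀ (norm_nonneg v) (h t) 2
    rw [norm_sub_sq_real, inner_smul_right, norm_smul, mul_pow, Real.norm_eq_abs, sq_abs] at h1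
    linarith
  -- The `+ 1` keeps the step length meaningful when `w = 0`.
  have h2 := key (inner ℝ v w / (‖w‖ ^ 2 + 1))
  set c : ℝ := inner ℝ v w
  set W : ℝ := ‖w‖ ^ 2
  have hW : 0 ≤ W := by positivity
  have h3 : (c / (W + 1)) ^ 2 * W - 2 * (c / (W + 1)) * c
      = -(c ^ 2 * (W + 2)) / (W + 1) ^ 2 := by
    field_simp
    ring
  rw [h3, le_div_iff₀ (by positivity)] at h2
  have h4 : c ^ 2 = 0 := by nlinarith [sq_nonneg c, mul_nonneg (sq_nonneg c) hW]
  exact pow_eq_zero_iff (two_ne_zero) |>.1 h4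

/-- Moving from `o` to its projection `q`, a point `p` within `L` of a point `c` of the flat loses
at most `h (2L - h)` in squared distance, where `h = ‖o - q‖`. -/
lemma good_point_sq {E : Type*} [NormedAddCommGroup E] [InnerProductSpace ℝ E]
    (p c o q : E) (L : ℝ) (horth : inner ℝ (o - q) (c - q) = 0) (hp : ‖p - c‖ ≤ L) :
    ‖p - q‖ ^ 2 ≤ ‖p - o‖ ^ 2 + ‖o - q‖ * (2 * L - ‖o - q‖) := by
  have e1 : p - o = (p - q) - (o - q) := by abel
  have e2 : inner ℝ (p - q) (o - q) = inner ℝ (p - c) (o - q) := by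
    have : p - q = (p - c) + (c - q) := by abel
    rw [this, inner_add_left, real_inner_comm (o - q) (c - q), horth, add_zero]
  have e3 : inner ℝ (p - c) (o - q) ≤ L * ‖o - q‖ :=
    (real_inner_le_norm _ _).trans (mul_le_mul_of_nonneg_right hp (norm_nonneg _))
  rw [e1, norm_sub_sq_real (p - q), e2]
  nlinarith

open Classical in
theorem stmt_16 {d j : ℕ} (P : Finset (EuclideanSpace ℝ (Fin d))) (hP : P.Nonempty)
    (ε L : ℝ) (hε0 : 0 < ε) (hε1 : ε < 1 / 5) (hL : 0 ≤ L)
    (Ps : Fin j → Finset (EuclideanSpace ℝ (Fin d)))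
    (hne : ∀ l, (Ps l).Nonempty) (hsub : ∀ l, Ps l ⊆ P)
    (hdisj : ∀ l₁ l₂, l₁ ≠ l₂ → Disjoint (Ps l₁) (Ps l₂))
    (hsmall : ((P \ Finset.univ.biUnion Ps).card : ℝ) ≤ ε * P.card)
    (os : Fin j → EuclideanSpace ℝ (Fin d))
    (hmed : ∀ l, IsGeomMedian (Ps l) (os l))
    (hball : ∀ l, ∀ p ∈ Ps l, ‖p - os l‖ ≤ L)
    (o : EuclideanSpace ℝ (Fin d)) (ho : IsGeomMedian P o)
    (otil : EuclideanSpace ℝ (Fin d))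
    (hmem : otil ∈ affineSpan ℝ (Set.range os))
    (hproj : ∀ y ∈ (affineSpan ℝ (Set.range os) : Set (EuclideanSpace ℝ (Fin d))),
      ‖o - otil‖ ≤ ‖o - y‖) :
    (P.card : ℝ)⁻¹ * ∑ p ∈ P, ‖p - otil‖ ≤
      (1 / (1 - ε)) * ((P.card : ℝ)⁻¹ * ∑ p ∈ P, ‖p - o‖) + L := by
  set h : ℝ := ‖o - otil‖ with hh
  have h0 : 0 ≤ h := norm_nonneg _
  have hn : (0 : ℝ) < P.card := by exact_mod_cast hP.card_pos
  set G := Finset.univ.biUnion Ps with hG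
  have hGP : G ⊆ P := Finset.biUnion_subset.2 fun l _ => hsub l
  have hos : ∀ l, os l ∈ affineSpan ℝ (Set.range os) :=
    fun l => subset_affineSpan ℝ _ (Set.mem_range_self l)
  have horth : ∀ l, inner ℝ (o - otil) (os l - otil) = 0 := by
    intro l
    apply inner_eq_zero_of_norm_le
    intro t
    have := hproj _ (AffineMap.lineMap_mem t hmem (hos l))
    rw [AffineMap.lineMap_apply, vsub_eq_sub, vadd_eq_add] at this
    rwa [sub_sub, add_comm otil]
  have hsq : ∀ p ∈ G, ‖p - otil‖ ^ 2 ≤ ‖p - o‖ ^ 2 + h * (2 * L - h) := by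
    intro p hp
    obtain ⟨l, -, hl⟩ := Finset.mem_biUnion.1 hp
    exact good_point_sq p (os l) o otil L (horth l) (hball l p hl)
  have hfar : ∀ p ∈ G, h - L ≤ ‖p - o‖ := by
    intro p hp
    obtain ⟨l, -, hl⟩ := Finset.mem_biUnion.1 hp
    have h1 := hproj _ (hos l)
    have h2 := hball l p hl
    have h3 := norm_sub_le_norm_sub_add_norm_sub o p (os l)
    rw [norm_sub_rev o p] at h3
    linarith
  have htri : ∀ p, ‖p - otil‖ ≤ ‖p - o‖ + h :=
    fun p => norm_sub_le_norm_sub_add_norm_sub p o otil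
  set S := ∑ p ∈ P, ‖p - o‖ with hS
  have hS0 : 0 ≤ S := Finset.sum_nonneg fun p _ => norm_nonneg _
  set m : ℝ := ((P \ G).card : ℝ) with hm
  have hm0 : 0 ≤ m := Nat.cast_nonneg _
  have hcard : (G.card : ℝ) = P.card - m := by
    have := Finset.card_sdiff_add_card_eq_card hGP
    rw [hm, ← this]
    push_cast
    ring
  have hsplit : ∀ g : ℝ, (∀ p ∈ G, ‖p - otil‖ ≤ ‖p - o‖ + g) →
      ∑ p ∈ P, ‖p - otil‖ ≤ S + (P.card - m) * g + m * h := by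
    intro g hg
    have h1 := Finset.sum_le_sum hg
    have h2 := Finset.sum_le_sum fun p (_ : p ∈ P \ G) => htri p
    rw [Finset.sum_add_distrib, Finset.sum_const, nsmul_eq_mul] at h1 h2
    rw [hcard] at h1
    rw [hS, ← Finset.sum_sdiff hGP, ← Finset.sum_sdiff hGP]
    linarith
  have hε : 0 < 1 - ε := by linarith
  set T := S / (1 - ε) with hT
  have hTS : T * (1 - ε) = S := div_mul_cancel₀ _ hε.ne'
  have hT0 : 0 ≤ T := div_nonneg hS0 hε.le
  have hST : S ≤ T := by nlinarith
  have main : ∑ p ∈ P, ‖p - otil‖ ≤ T + P.card * L := by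
    rcases le_total h L with hc | hc
    · have := hsplit h fun p _ => htri p
      nlinarith
    rcases le_total h (2 * L) with hc2 | hc2
    · have h1 := hsplit (2 * L - h) fun p hp => by
        have h2 := hsq p hp
        have h3 := hfar p hp
        have h4 := norm_nonneg (p - o)
        refine (sq_le_sq₀ (norm_nonneg _) (by linarith)).1 ?_
        nlinarith [mul_nonneg (sub_nonneg.2 hc2) (sub_nonneg.2 h3)]
      have h5 : 0 ≤ (P.card - 2 * m) * (h - L) :=
        mul_nonneg (by nlinarith) (by linarith)
      nlinarith
    · have h1 := hsplit 0 fun p hp => by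
        have h2 := hsq p hp
        have h4 := norm_nonneg (p - o)
        refine (sq_le_sq₀ (norm_nonneg _) (by linarith)).1 ?_
        nlinarith [mul_nonneg h0 (sub_nonneg.2 hc2)]
      have h2 : (P.card - m) * (h - L) ≤ S := by
        have h3 := Finset.sum_le_sum hfar
        rw [Finset.sum_const, nsmul_eq_mul, hcard] at h3
        exact h3.trans (Finset.sum_le_sum_of_subset_of_nonneg hGP fun _ _ _ => norm_nonneg _)
      have h3 : (1 - ε) * (P.card * (h - L)) ≤ (1 - ε) * T := by
        have : 0 ≤ (ε * P.card - m) * (h - L) := mul_nonneg (by linarith) (by linarith)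
        nlinarith
      have h4 : P.card * (h - L) ≤ T := le_of_mul_le_mul_left h3 hε
      have h5 : m * h ≤ ε * P.card * h := mul_le_mul_of_nonneg_right hsmall h0
      have h6 : ε * (P.card * (h - L)) ≤ ε * T := mul_le_mul_of_nonneg_left h4 hε0.le
      have h7 : 0 ≤ (1 - ε) * (P.card * L) := by positivity
      nlinarith
  calc (P.card : ℝ)⁻¹ * ∑ p ∈ P, ‖p - otil‖ ≤ (P.card : ℝ)⁻¹ * (T + P.card * L) :=
        mul_le_mul_of_nonneg_left main (by positivity)
    _ = (1 / (1 - ε)) * ((P.card : ℝ)⁻¹ * S) + L := by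
        rw [hT]
        field_simp
end

section
/- Let P be a nonempty finite set of points in ℝ^d, let ε ∈ (0, 1/5), and let P_1, …, P_j be pairwise disjoint nonempty subsets of P with |P \ (P_1 ∪ ⋯ ∪ P_j)| ≤ ε|P|. For each 1 ≤ l ≤ j let o_l be a geometric median of P_l, and assume P_l is contained in the closed ball of radius L ≥ 0 centered at o_l. Let o be a geometric median of P, let F be the affine span of {o_1,…,o_j}, and let õ be the orthogonal projection of o onto F. Then at least one of the following two statements holds: (1) there exist two distinct indices l_1 ≠ l_2 in {1,…,j} such that both ||o_{l_1} − õ|| and ||o_{l_2} − õ|| are at most L + (3j/(1−ε)) · (1/|P|) · ∑_{p∈P} ||p − o||; (2) there exists an index l_0 ∈ {1,…,j} such that ||o_{l_0} − õ|| ≤ (1 + (1+2ε)/√(3−12ε)) · L. -/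
/-- The nearest point `q` to `o` in an affine subspace satisfies `‖y - q‖ ≤ ‖y - o‖` for `y` in
the subspace. -/
lemma norm_sub_proj_le {E : Type*} [NormedAddCommGroup E] [InnerProductSpace ℝ E]
    (F : AffineSubspace ℝ E) (o q : E) (hq : q ∈ F)
    (hproj : ∀ y ∈ (F : Set E), ‖o - q‖ ≤ ‖o - y‖) (y : E) (hy : y ∈ F) :
    ‖y - q‖ ≤ ‖y - o‖ := by
  have key : ∀ t : ℝ, 2 * t * inner ℝ (o - q) (y - q) ≤ t ^ 2 * ‖y - q‖ ^ 2 := by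
    intro t
    have h1 := hproj _ (AffineMap.lineMap_mem t hq hy)
    have h2 : o - AffineMap.lineMap q y t = (o - q) - t • (y - q) := by
      rw [AffineMap.lineMap_apply]; simp only [vsub_eq_sub, vadd_eq_add]; abel
    rw [h2] at h1
    have h3 := pow_le_pow_left₀ (norm_nonneg _) h1 2
    rw [norm_sub_sq_real (o - q), inner_smul_right, norm_smul, mul_pow, Real.norm_eq_abs,
      sq_abs] at h3
    linarith
  have h0 : inner ℝ (o - q) (y - q) ≤ 0 := by
    by_contra! hpos
    have hw : 0 < ‖y - q‖ ^ 2 := by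
      by_contra! hw
      nlinarith [key 1]
    have h := key (inner ℝ (o - q) (y - q) / ‖y - q‖ ^ 2)
    have e : (inner ℝ (o - q) (y - q) / ‖y - q‖ ^ 2) ^ 2 * ‖y - q‖ ^ 2
        = inner ℝ (o - q) (y - q) / ‖y - q‖ ^ 2 * inner ℝ (o - q) (y - q) := by
      field_simp
    rw [e] at h
    have : 0 < inner ℝ (o - q) (y - q) / ‖y - q‖ ^ 2 * inner ℝ (o - q) (y - q) := by positivity
    linarith
  refine (pow_le_pow_iff_left₀ (norm_nonneg _) (norm_nonneg _) two_ne_zero).mp ?_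
  have e : y - o = (y - q) - (o - q) := by abel
  rw [e, norm_sub_sq_real (y - q), real_inner_comm]
  nlinarith [sq_nonneg ‖o - q‖]

/-- First-order decrease of the distance to a point `v` of the ball of radius `L` about `w`, when
moving from the origin to `t • w`. -/
lemma norm_sub_smul_le {E : Type*} [NormedAddCommGroup E] [InnerProductSpace ℝ E]
    (v w : E) (L t : ℝ) (ht : 0 ≤ t) (hL : 0 ≤ L) (hr : L < ‖w‖) (hv : ‖v - w‖ ≤ L) :
    ‖v - t • w‖ ≤ ‖v‖ - t * √(‖w‖ ^ 2 - L ^ 2) + t ^ 2 * (‖w‖ ^ 2 / (2 * (‖w‖ - L))) := by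
  set s := √(‖w‖ ^ 2 - L ^ 2) with hs
  have hs2 : s ^ 2 = ‖w‖ ^ 2 - L ^ 2 := Real.sq_sqrt (by nlinarith)
  have ha : ‖w‖ - L ≤ ‖v‖ := by
    have := norm_sub_norm_le w v
    rw [norm_sub_rev] at this
    linarith
  have hm : 0 < ‖w‖ - L := by linarith
  have ha0 : 0 < ‖v‖ := by linarith
  have hin : ‖v‖ * s ≤ inner ℝ v w := by
    have h1 := pow_le_pow_left₀ (norm_nonneg _) hv 2
    rw [norm_sub_sq_real] at h1
    nlinarith [sq_nonneg (‖v‖ - s)]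
  have h1 : ‖v - t • w‖ ^ 2 ≤ ‖v‖ ^ 2 - 2 * t * (‖v‖ * s) + t ^ 2 * ‖w‖ ^ 2 := by
    rw [norm_sub_sq_real, inner_smul_right, norm_smul, mul_pow, Real.norm_eq_abs, sq_abs]
    nlinarith
  -- `x ≤ a + (x² - a²) / (2a)` by AM-GM
  have h2 : ‖v - t • w‖ ≤ ‖v‖ - t * s + t ^ 2 * (‖w‖ ^ 2 / (2 * ‖v‖)) := by
    have e : ‖v‖ - t * s + t ^ 2 * (‖w‖ ^ 2 / (2 * ‖v‖))
        = (2 * ‖v‖ ^ 2 - 2 * t * (‖v‖ * s) + t ^ 2 * ‖w‖ ^ 2) / (2 * ‖v‖) := by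
      field_simp
    rw [e, le_div_iff₀ (by positivity)]
    nlinarith [sq_nonneg (‖v - t • w‖ - ‖v‖)]
  have h3 : ‖w‖ ^ 2 / (2 * ‖v‖) ≤ ‖w‖ ^ 2 / (2 * (‖w‖ - L)) := by gcongr
  nlinarith [sq_nonneg t]

open Classical in
/-- Robustness of the geometric median: a subset `A` of `P` contained in the ball of radius `L`
about `c` forces `o` to be close to `c` once `A` is a majority. -/
lemma median_robust {d : ℕ} (P A : Finset (EuclideanSpace ℝ (Fin d))) (hA : A ⊆ P)
    (o c : EuclideanSpace ℝ (Fin d)) (L : ℝ) (hL : 0 ≤ L) (ho : IsGeomMedian P o)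
    (hball : ∀ p ∈ A, ‖p - c‖ ≤ L) (hr : L < ‖c - o‖) :
    (A.card : ℝ) * √(‖c - o‖ ^ 2 - L ^ 2) ≤ ((P \ A).card : ℝ) * ‖c - o‖ := by
  set w := c - o with hw
  set s := √(‖w‖ ^ 2 - L ^ 2) with hs
  set K := ‖w‖ ^ 2 / (2 * (‖w‖ - L)) with hK
  have hK0 : 0 < K := by
    have h1 : 0 < ‖w‖ - L := by linarith
    have h2 : 0 < ‖w‖ := by linarith
    positivity
  have step : ∀ t : ℝ, 0 ≤ t →
      0 ≤ ((P \ A).card : ℝ) * (t * ‖w‖) + (A.card : ℝ) * (-(t * s) + t ^ 2 * K) := by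
    intro t ht
    have h := ho (o + t • w)
    rw [← Finset.sum_sdiff hA, ← Finset.sum_sdiff hA] at h
    have h1 : ∑ p ∈ P \ A, ‖p - (o + t • w)‖ ≤ ∑ p ∈ P \ A, (‖p - o‖ + t * ‖w‖) := by
      refine Finset.sum_le_sum fun p _ => ?_
      have e : p - (o + t • w) = (p - o) - t • w := by abel
      rw [e]
      refine (norm_sub_le _ _).trans_eq ?_
      rw [norm_smul, Real.norm_of_nonneg ht]
    have h2 : ∑ p ∈ A, ‖p - (o + t • w)‖ ≤ ∑ p ∈ A, (‖p - o‖ + (-(t * s) + t ^ 2 * K)) := by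
      refine Finset.sum_le_sum fun p hp => ?_
      have e : p - (o + t • w) = (p - o) - t • w := by abel
      have e2 : (p - o) - w = p - c := by rw [hw]; abel
      have := norm_sub_smul_le (p - o) w L t ht hL hr (by rw [e2]; exact hball p hp)
      rw [e]
      linarith
    rw [Finset.sum_add_distrib, Finset.sum_const, nsmul_eq_mul] at h1 h2
    linarith
  by_contra! hlt
  have hk : 0 < (A.card : ℝ) := by
    rcases (Nat.cast_nonneg A.card : (0 : ℝ) ≤ A.card).eq_or_lt with h0 | h0
    · rw [← h0] at hlt
      have : 0 ≤ ((P \ A).card : ℝ) * ‖w‖ := by positivity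
      linarith
    · exact h0
  set δ := (A.card : ℝ) * s - ((P \ A).card : ℝ) * ‖w‖ with hδ
  have hδ0 : 0 < δ := by linarith
  -- minimizer of the quadratic upper bound `-tδ + t²|A|K` for the change of the cost
  have h := step (δ / (2 * (A.card * K))) (by positivity)
  have e : ((P \ A).card : ℝ) * (δ / (2 * (A.card * K)) * ‖w‖)
      + (A.card : ℝ) * (-(δ / (2 * (A.card * K)) * s) + (δ / (2 * (A.card * K))) ^ 2 * K)
      = -(δ ^ 2 / (4 * (A.card * K))) := by
    have e1 : (A.card : ℝ) * ((δ / (2 * (A.card * K))) ^ 2 * K) = δ ^ 2 / (4 * (A.card * K)) := by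
      field_simp; norm_num
    have e2 : δ / (2 * (A.card * K)) * δ = 2 * (δ ^ 2 / (4 * (A.card * K))) := by
      field_simp; norm_num
    have e3 : δ / (2 * (A.card * K)) * δ = δ / (2 * (A.card * K)) *
      ((A.card : ℝ) * s - ((P \ A).card : ℝ) * ‖w‖) := by rw [← hδ]
    linarith
  rw [e] at h
  have : 0 < δ ^ 2 / (4 * (A.card * K)) := by positivity
  linarith

/-- Markov's inequality for a finite sum, in the form also valid when the mean is zero. -/
lemma card_far_le {α : Type*} (P : Finset α) (hP : P.Nonempty) (f : α → ℝ) (hf : ∀ p, 0 ≤ f p)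
    (C : ℝ) (hC : 0 < C) :
    ((P.filter fun p => C * ((P.card : ℝ)⁻¹ * ∑ p ∈ P, f p) < f p).card : ℝ) * C ≤ P.card := by
  set S := ∑ p ∈ P, f p with hS
  set Q := P.filter fun p => C * ((P.card : ℝ)⁻¹ * S) < f p with hQ
  have hn : 0 < (P.card : ℝ) := by exact_mod_cast hP.card_pos
  have hS0 : 0 ≤ S := Finset.sum_nonneg fun p _ => hf p
  rcases hS0.eq_or_lt with h0 | h0
  · have hQe : Q = ∅ := by
      refine Finset.filter_eq_empty_iff.mpr fun p hp => ?_
      have := Finset.single_le_sum (f := f) (fun i _ => hf i) hp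
      rw [← h0]
      simp only [mul_zero, not_lt]
      linarith
    rw [hQe]
    simp
  · have h1 : (Q.card : ℝ) * (C * ((P.card : ℝ)⁻¹ * S)) ≤ S := by
      rw [← nsmul_eq_mul]
      refine (Finset.card_nsmul_le_sum Q f _ fun p hp => (Finset.mem_filter.mp hp).2.le).trans ?_
      exact Finset.sum_le_sum_of_subset_of_nonneg (Finset.filter_subset _ _) fun p _ _ => hf p
    have e : (Q.card : ℝ) * (C * ((P.card : ℝ)⁻¹ * S)) = (Q.card * C / P.card) * S := by
      field_simp
    rw [e] at h1
    have h2 : (Q.card : ℝ) * C / P.card ≤ 1 := by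
      by_contra! h
      nlinarith
    rwa [div_le_one hn] at h2

/-- The numerical passage from the robustness inequality, with at most `(1 + 2ε) n / 3` outliers
`m` and `k = n - m` inliers, to the bound on `r`. -/
lemma radius_bound (ε L r k m n : ℝ) (hε0 : 0 < ε) (hε1 : ε < 1 / 5) (hL : 0 ≤ L) (hr : L < r)
    (hn : 0 < n) (hkm : k + m = n) (hm : m ≤ (1 + 2 * ε) / 3 * n)
    (h : k * √(r ^ 2 - L ^ 2) ≤ m * r) :
    r ≤ (1 + (1 + 2 * ε) / √(3 - 12 * ε)) * L := by
  set s := √(r ^ 2 - L ^ 2)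
  have hs0 : 0 ≤ s := Real.sqrt_nonneg _
  have hs2 : s ^ 2 = r ^ 2 - L ^ 2 := Real.sq_sqrt (by nlinarith)
  set S := √(3 - 12 * ε)
  have hS2 : S ^ 2 = 3 - 12 * ε := Real.sq_sqrt (by linarith)
  have hS0 : 0 < S := Real.sqrt_pos.mpr (by linarith)
  have hr0 : 0 < r := by linarith
  have h1 : 2 * (1 - ε) * s ≤ (1 + 2 * ε) * r := by
    have hk : 2 * (1 - ε) / 3 * n ≤ k := by linarith
    have h2 : 2 * (1 - ε) / 3 * n * s ≤ (1 + 2 * ε) / 3 * n * r :=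
      (mul_le_mul_of_nonneg_right hk hs0).trans
        (h.trans (mul_le_mul_of_nonneg_right hm hr0.le))
    have h3 : n * (2 * (1 - ε) * s) ≤ n * ((1 + 2 * ε) * r) := by linarith
    exact le_of_mul_le_mul_left h3 hn
  have h2 : S * r ≤ 2 * (1 - ε) * L := by
    have h3 := pow_le_pow_left₀ (by nlinarith) h1 2
    refine abs_le_of_sq_le_sq' ?_ (mul_nonneg (by linarith) hL) |>.2
    rw [mul_pow, hS2]
    rw [mul_pow, hs2] at h3
    nlinarith
  have h3 : 1 - 4 * ε ≤ S := by
    refine abs_le_of_sq_le_sq' ?_ hS0.le |>.2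
    rw [hS2]
    nlinarith
  have e : (1 + (1 + 2 * ε) / S) * L = ((S + (1 + 2 * ε)) * L) / S := by field_simp
  rw [e, le_div_iff₀ hS0]
  nlinarith

open Classical in
theorem stmt_17 {d j : ℕ} (P : Finset (EuclideanSpace ℝ (Fin d))) (hP : P.Nonempty)
    (ε L : ℝ) (hε0 : 0 < ε) (hε1 : ε < 1 / 5) (hL : 0 ≤ L)
    (Ps : Fin j → Finset (EuclideanSpace ℝ (Fin d)))
    (hne : ∀ l, (Ps l).Nonempty) (hsub : ∀ l, Ps l ⊆ P)
    (hdisj : ∀ l₁ l₂, l₁ ≠ l₂ → Disjoint (Ps l₁) (Ps l₂))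
    (hsmall : ((P \ Finset.univ.biUnion Ps).card : ℝ) ≤ ε * P.card)
    (os : Fin j → EuclideanSpace ℝ (Fin d))
    (hmed : ∀ l, IsGeomMedian (Ps l) (os l))
    (hball : ∀ l, ∀ p ∈ Ps l, ‖p - os l‖ ≤ L)
    (o : EuclideanSpace ℝ (Fin d)) (ho : IsGeomMedian P o)
    (otil : EuclideanSpace ℝ (Fin d))
    (hmem : otil ∈ affineSpan ℝ (Set.range os))
    (hproj : ∀ y ∈ (affineSpan ℝ (Set.range os) : Set (EuclideanSpace ℝ (Fin d))),
      ‖o - otil‖ ≤ ‖o - y‖) :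
    (∃ l₁ l₂ : Fin j, l₁ ≠ l₂ ∧
      ‖os l₁ - otil‖ ≤ L + (3 * j / (1 - ε)) * ((P.card : ℝ)⁻¹ * ∑ p ∈ P, ‖p - o‖) ∧
      ‖os l₂ - otil‖ ≤ L + (3 * j / (1 - ε)) * ((P.card : ℝ)⁻¹ * ∑ p ∈ P, ‖p - o‖)) ∨
    (∃ l₀ : Fin j, ‖os l₀ - otil‖ ≤ (1 + (1 + 2 * ε) / Real.sqrt (3 - 12 * ε)) * L) := by
  have hn : 0 < (P.card : ℝ) := by exact_mod_cast hP.card_pos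
  have hj : 1 ≤ (j : ℝ) := by
    rcases Nat.eq_zero_or_pos j with rfl | h
    · simp only [Set.range_eq_empty, AffineSubspace.span_empty] at hmem
      exact absurd hmem (AffineSubspace.notMem_bot ℝ _ _)
    · exact_mod_cast h
  set C : ℝ := 3 * j / (1 - ε) with hC
  set T : ℝ := C * ((P.card : ℝ)⁻¹ * ∑ p ∈ P, ‖p - o‖) with hT
  have hC3 : 3 / (1 - ε) ≤ C := by
    rw [hC]
    have : 0 < 1 - ε := by linarith
    gcongr
    linarith
  have hC0 : 0 < C := lt_of_lt_of_le (div_pos (by norm_num) (by linarith)) hC3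
  set Q := P.filter fun p => T < ‖p - o‖ with hQ
  have hQcard : (Q.card : ℝ) ≤ (1 - ε) / 3 * P.card := by
    have h1 : (Q.card : ℝ) * C ≤ P.card :=
      card_far_le P hP (fun p => ‖p - o‖) (fun _ => norm_nonneg _) C hC0
    have h2 : (Q.card : ℝ) * (3 / (1 - ε)) ≤ P.card :=
      (mul_le_mul_of_nonneg_left hC3 (Nat.cast_nonneg _)).trans h1
    have h3 : 0 < 1 - ε := by linarith
    rw [← mul_div_assoc, div_le_iff₀ h3] at h2
    linarith
  have hcontr : ∀ l, ‖os l - otil‖ ≤ ‖os l - o‖ := fun l =>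
    norm_sub_proj_le _ o otil hmem hproj (os l) (subset_affineSpan ℝ _ (Set.mem_range_self l))
  have hfar : ∀ l, L + T < ‖os l - otil‖ → Ps l ⊆ Q := by
    intro l hl p hp
    refine Finset.mem_filter.mpr ⟨hsub l hp, ?_⟩
    have h1 := hball l p hp
    have h2 := hcontr l
    have h3 : ‖os l - o‖ ≤ ‖p - os l‖ + ‖p - o‖ := by
      rw [norm_sub_rev p (os l)]
      exact norm_sub_le_norm_sub_add_norm_sub _ _ _
    linarith
  have hbad : (((P \ Finset.univ.biUnion Ps) ∪ Q).card : ℝ) ≤ (1 + 2 * ε) / 3 * P.card := by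
    have : (((P \ Finset.univ.biUnion Ps) ∪ Q).card : ℝ)
        ≤ (P \ Finset.univ.biUnion Ps).card + Q.card := by
      exact_mod_cast Finset.card_union_le _ _
    linarith
  by_cases h1 : ∃ l₁ l₂ : Fin j, l₁ ≠ l₂ ∧ ‖os l₁ - otil‖ ≤ L + T ∧ ‖os l₂ - otil‖ ≤ L + T
  · exact Or.inl h1
  right
  by_cases h2 : ∃ l, ‖os l - otil‖ ≤ L + T
  · obtain ⟨l, hl⟩ := h2
    refine ⟨l, (hcontr l).trans ?_⟩
    have hother : ∀ l', l' ≠ l → Ps l' ⊆ Q := fun l' hne' =>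
      hfar l' (not_le.mp fun h => h1 ⟨l', l, hne', h, hl⟩)
    have hsubset : P \ Ps l ⊆ (P \ Finset.univ.biUnion Ps) ∪ Q := by
      intro p hp
      obtain ⟨hpP, hpl⟩ := Finset.mem_sdiff.mp hp
      by_cases hU : p ∈ Finset.univ.biUnion Ps
      · obtain ⟨l', -, hl'⟩ := Finset.mem_biUnion.mp hU
        refine Finset.mem_union_right _ (hother l' ?_ hl')
        rintro rfl
        exact hpl hl'
      · exact Finset.mem_union_left _ (Finset.mem_sdiff.mpr ⟨hpP, hU⟩)
    have hm : ((P \ Ps l).card : ℝ) ≤ (1 + 2 * ε) / 3 * P.card :=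
      (Nat.cast_le.mpr (Finset.card_le_card hsubset)).trans hbad
    rcases le_or_gt ‖os l - o‖ L with hr | hr
    · have : 0 ≤ (1 + 2 * ε) / √(3 - 12 * ε) :=
        div_nonneg (by linarith) (Real.sqrt_nonneg _)
      nlinarith
    · refine radius_bound ε L _ (Ps l).card (P \ Ps l).card P.card hε0 hε1 hL hr hn ?_ hm
        (median_robust P (Ps l) (hsub l) o (os l) L hL ho (hball l) hr)
      rw [add_comm]
      exact_mod_cast Finset.card_sdiff_add_card_eq_card (hsub l)
  · push Not at h2
    exfalso
    have hsubset : P ⊆ (P \ Finset.univ.biUnion Ps) ∪ Q := by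
      intro p hpP
      by_cases hU : p ∈ Finset.univ.biUnion Ps
      · obtain ⟨l', -, hl'⟩ := Finset.mem_biUnion.mp hU
        exact Finset.mem_union_right _ (hfar l' (h2 l') hl')
      · exact Finset.mem_union_left _ (Finset.mem_sdiff.mpr ⟨hpP, hU⟩)
    have := (Nat.cast_le (α := ℝ).mpr (Finset.card_le_card hsubset)).trans hbad
    nlinarith
end
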